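/- arXiv:1103.0370 — 2 statements merged into one kernel-verified Lean document; each statement's English description precedes it below -/
import Mathlib

section
/- Fix a non-negative integer n and a positive integer b, and let a₁ and a₂ be integers with gcd(a₁, b) = 1 and gcd(a₂, b) = 1. If rₙ(a₁, b) = rₙ(a₂, b), then b divides (6·n² + 1 − a₁·a₂)·(a₂ − a₁). -/
/-- The sawtooth function `((x))`: equal to `x - ⌊x⌋ - 1/2` if `x` is not an
integer, and `0` if `x` is an integer. -/
def sawtooth (x : ℚ) : ℚ := if Int.fract x = 0 then 0 else Int.fract x - 1/2

/-- The Dedekind–Rademacher sum `rₙ(a,b) = ∑_{k=0}^{b-1} (((k·a+n)/b)) ((k/b))`. -/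
def rademacherSum (n : ℕ) (a : ℤ) (b : ℕ) : ℚ :=
  ∑ k ∈ Finset.range b, sawtooth (((k : ℚ) * a + n) / b) * sawtooth ((k : ℚ) / b)

lemma saw_int (z : ℤ) (b : ℕ) (hb : 0 < b) :
    sawtooth ((z : ℚ) / b) = ((z % b : ℤ) : ℚ) / b - 1/2 + if z % b = 0 then 1/2 else 0 := by
  have hb' : (b : ℚ) ≠ 0 := by positivity
  have h : Int.fract ((z : ℚ) / b) = ((z % b : ℤ) : ℚ) / b := by
    rw [Int.fract_eq_iff]
    have h1 : (0 : ℤ) ≤ z % b := Int.emod_nonneg _ (by omega)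
    have h2 : z % b < (b : ℤ) := Int.emod_lt_of_pos _ (by omega)
    refine ⟨by positivity, ?_, z / b, ?_⟩
    · rw [div_lt_one (by positivity)]
      exact_mod_cast h2
    · have h3 : (z : ℚ) = (z % b : ℤ) + (b : ℚ) * (z / b : ℤ) := by
        exact_mod_cast (Int.emod_add_mul_ediv z b).symm
      field_simp
      linarith
  unfold sawtooth
  rw [h]
  by_cases hz : z % (b : ℤ) = 0
  · simp [hz]
  · rw [if_neg, if_neg hz, add_zero]
    simp only [div_eq_zero_iff, not_or]
    exact ⟨by exact_mod_cast hz, hb'⟩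

lemma perm_facts (n : ℕ) (b : ℕ) (hb : 0 < b) (a : ℤ) (h : Int.gcd a b = 1) :
    Set.InjOn (fun k : ℕ => (((k : ℤ) * a + n) % b).toNat) (Finset.range b : Finset ℕ) ∧
    Set.SurjOn (fun k : ℕ => (((k : ℤ) * a + n) % b).toNat) (Finset.range b : Finset ℕ)
      (Finset.range b : Finset ℕ) ∧
    Set.MapsTo (fun k : ℕ => (((k : ℤ) * a + n) % b).toNat) (Finset.range b : Finset ℕ)
      (Finset.range b : Finset ℕ) := by
  have nn : ∀ z : ℤ, 0 ≤ z % b := fun z => Int.emod_nonneg _ (by omega)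
  have lt : ∀ z : ℤ, z % b < b := fun z => Int.emod_lt_of_pos _ (by omega)
  have hm : Set.MapsTo (fun k : ℕ => (((k : ℤ) * a + n) % b).toNat) (Finset.range b : Finset ℕ)
      (Finset.range b : Finset ℕ) := by
    intro k _
    have := nn ((k : ℤ) * a + n)
    have := lt ((k : ℤ) * a + n)
    simp only [Finset.coe_range, Set.mem_Iio]
    omega
  have hi : Set.InjOn (fun k : ℕ => (((k : ℤ) * a + n) % b).toNat)
      (Finset.range b : Finset ℕ) := by
    intro k hk l hl hkl
    simp only [Finset.coe_range, Set.mem_Iio] at hk hl hkl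
    have h1 := nn ((k : ℤ) * a + n)
    have h2 := nn ((l : ℤ) * a + n)
    have h3 : ((k : ℤ) * a + n) % b = ((l : ℤ) * a + n) % b := by omega
    have h4 := Int.ModEq.dvd (n := (b:ℤ)) h3
    have h5 : (b : ℤ) ∣ ((l : ℤ) - k) * a := by
      have : ((l : ℤ) - k) * a = (l * a + n) - (k * a + n) := by ring
      rw [this]; exact h4
    have h6 : (b : ℤ) ∣ (l : ℤ) - k :=
      Int.dvd_of_dvd_mul_left_of_gcd_one (by rwa [mul_comm] at h5) (by rwa [Int.gcd_comm])
    have := Int.eq_zero_of_abs_lt_dvd h6 (by rw [abs_lt]; omega)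
    omega
  exact ⟨hi, Finset.surjOn_of_injOn_of_card_le _ hm hi le_rfl, hm⟩

lemma sum_perm (n : ℕ) (b : ℕ) (hb : 0 < b) (a : ℤ) (h : Int.gcd a b = 1) (f : ℤ → ℤ) :
    ∑ k ∈ Finset.range b, f (((k : ℤ) * a + n) % b) = ∑ k ∈ Finset.range b, f k := by
  obtain ⟨hi, hs, hm⟩ := perm_facts n b hb a h
  refine Finset.sum_nbij (fun k : ℕ => (((k : ℤ) * a + n) % b).toNat) hm hi hs ?_
  intro k _
  rw [Int.toNat_of_nonneg (Int.emod_nonneg _ (by omega))]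

lemma sum1 (b : ℕ) : 2 * ∑ k ∈ Finset.range b, (k : ℤ) = b * (b - 1) := by
  induction b with
  | zero => simp
  | succ b ih => rw [Finset.sum_range_succ, mul_add, ih]; push_cast; ring

lemma sum2 (b : ℕ) : 6 * ∑ k ∈ Finset.range b, (k : ℤ)^2 = b * (b - 1) * (2 * b - 1) := by
  induction b with
  | zero => simp
  | succ b ih => rw [Finset.sum_range_succ, mul_add, ih]; push_cast; ring

lemma S_cong (n : ℕ) (b : ℕ) (hb : 0 < b) (a : ℤ) (h : Int.gcd a b = 1) :
    ∃ Y : ℤ, a * (12 * ∑ k ∈ Finset.range b, (k : ℤ) * (((k : ℤ) * a + n) % b)) =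
      b * (1 + a^2 + 6 * n^2 - 6 * n * (a - 1)) + b^2 * Y := by
  have e1 := sum_perm n b hb a h (fun x => x)
  have e2 := sum_perm n b hb a h (fun x => x^2)
  have s1 := sum1 b
  have s2 := sum2 b
  try simp only at e1 e2
  rw [← e1] at s1
  have t1 := sum1 b
  have t2 := sum2 b
  rw [← e2] at s2
  have key : (b : ℤ)^2 * ∑ k ∈ Finset.range b, (((k : ℤ) * a + n) / b)^2 =
      ∑ k ∈ Finset.range b, (((k : ℤ) * a + n) % b)^2
      - 2 * a * (∑ k ∈ Finset.range b, (k : ℤ) * (((k : ℤ) * a + n) % b))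
      - 2 * n * (∑ k ∈ Finset.range b, (((k : ℤ) * a + n) % b))
      + a^2 * (∑ k ∈ Finset.range b, (k : ℤ)^2) + 2 * a * n * (∑ k ∈ Finset.range b, (k : ℤ))
      + b * n^2 := by
    have c : (b : ℤ) * n^2 = ∑ k ∈ Finset.range b, (n : ℤ)^2 := by simp
    rw [c]
    simp only [Finset.mul_sum, ← Finset.sum_sub_distrib, ← Finset.sum_add_distrib]
    refine Finset.sum_congr rfl fun k _ => ?_
    have := Int.emod_add_mul_ediv ((k : ℤ) * a + n) b
    have h2 : (b : ℤ) * (((k : ℤ) * a + n) / b) = (k * a + n) - (k * a + n) % b := by linarith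
    rw [← mul_pow, h2]; ring
  refine ⟨(1 + a^2) * (2 * b - 3) + 6 * n * (a - 1) -
    6 * ∑ k ∈ Finset.range b, (((k : ℤ) * a + n) / b)^2, ?_⟩
  linear_combination 6 * key + s2 + a^2 * t2 + 6 * a * n * t1 - 6 * n * s1

lemma rad_formula (n : ℕ) (b : ℕ) (hb : 0 < b) (a : ℤ) (h : Int.gcd a b = 1) :
    ∃ k0 : ℕ, (b : ℤ) ∣ k0 * a + n ∧ rademacherSum n a b =
      ((∑ k ∈ Finset.range b, (k : ℤ) * (((k : ℤ) * a + n) % b) : ℤ) : ℚ) / b^2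
      - (b - 1) / 2 + b / 4 + ((((n : ℤ) % b : ℤ) : ℚ) / b - 1/2) / 2 + ((k0 : ℚ) / b - 1/2)/2
      + (if (n : ℤ) % b = 0 then 1/4 else 0) := by
  have hb' : (b : ℚ) ≠ 0 := by positivity
  obtain ⟨hi, hs, hm⟩ := perm_facts n b hb a h
  obtain ⟨k0, hk0, hk⟩ := hs (show 0 ∈ _ by simpa using hb)
  have nn : ∀ z : ℤ, 0 ≤ z % b := fun z => Int.emod_nonneg _ (by omega)
  have hz : ((k0 : ℤ) * a + n) % b = 0 := by
    have := nn ((k0 : ℤ) * a + n)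
    simp only at hk
    omega
  refine ⟨k0, Int.dvd_of_emod_eq_zero hz, ?_⟩
  have iff0 : ∀ k ∈ Finset.range b, (((k : ℤ) * a + n) % b = 0 ↔ k = k0) := by
    intro k hkk
    constructor
    · intro h0
      apply hi (by simpa using hkk) hk0
      simp only [h0, hz]
    · rintro rfl; exact hz
  have hk0' : k0 ∈ Finset.range b := by simpa using hk0
  have h00 : (n : ℤ) % b = 0 ↔ k0 = 0 := by
    have := iff0 0 (by simpa using hb)
    simp only [Nat.cast_zero, zero_mul, zero_add] at this
    rw [this, eq_comm]
  have e1 := sum_perm n b hb a h (fun x => x)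
  have s1 := sum1 b
  have t1 := s1
  try simp only at e1
  rw [← e1] at s1
  have s1' : 2 * ∑ k ∈ Finset.range b, ((((k : ℤ) * a + n) % b : ℤ) : ℚ) = b * (b - 1) := by
    exact_mod_cast s1
  have t1' : 2 * ∑ k ∈ Finset.range b, (k : ℚ) = b * (b - 1) := by
    have := congrArg (Int.cast : ℤ → ℚ) t1
    push_cast at this
    exact this
  have main : rademacherSum n a b = ∑ k ∈ Finset.range b,
      ((1 / (b:ℚ)^2) * ((k : ℚ) * ((((k : ℤ) * a + n) % b : ℤ) : ℚ))
        - 1 / (2 * b) * ((((k : ℤ) * a + n) % b : ℤ) : ℚ) - 1 / (2 * b) * (k : ℚ) + 1/4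
        + (if k = 0 then (((((k : ℤ) * a + n) % b : ℤ) : ℚ) / b - 1/2) / 2 else 0)
        + (if k = k0 then ((k : ℚ) / b - 1/2) / 2 else 0)
        + (if k = k0 then (if k = 0 then 1/4 else 0) else 0)) := by
    unfold rademacherSum
    refine Finset.sum_congr rfl fun k hkk => ?_
    have a1 := saw_int ((k : ℤ) * a + n) b hb
    have a2 := saw_int (k : ℤ) b hb
    have : (k : ℤ) % b = k := Int.emod_eq_of_lt (by omega) (by
      have := Finset.mem_range.1 hkk; omega)
    rw [this] at a2
    simp only [iff0 k hkk] at a1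
    push_cast at a1 a2 ⊢
    rw [a1, a2]
    simp only [Nat.cast_eq_zero]
    split_ifs <;> field_simp <;> ring
  rw [main]
  simp only [Finset.sum_add_distrib, Finset.sum_sub_distrib, ← Finset.mul_sum,
    Finset.sum_ite_eq', hk0', if_true, Finset.mem_range.2 hb, h00]
  rw [Finset.sum_const, Finset.card_range, nsmul_eq_mul]
  rw [show ∑ k ∈ Finset.range b, ((((k : ℤ) * a + n) % b : ℤ) : ℚ) = b * (b - 1) / 2 by linarith,
    show ∑ k ∈ Finset.range b, (k : ℚ) = b * (b - 1) / 2 by linarith]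
  simp only [Nat.cast_zero, zero_mul, zero_add]
  push_cast
  field_simp
  ring

theorem rademacherSum_eq_imp_dvd (n : ℕ) (b : ℕ) (hb : 0 < b) (a₁ a₂ : ℤ)
    (h₁ : Int.gcd a₁ b = 1) (h₂ : Int.gcd a₂ b = 1)
    (h : rademacherSum n a₁ b = rademacherSum n a₂ b) :
    (b : ℤ) ∣ (6 * (n : ℤ) ^ 2 + 1 - a₁ * a₂) * (a₂ - a₁) := by
  obtain ⟨k1, ⟨c1, d1⟩, r1⟩ := rad_formula n b hb a₁ h₁
  obtain ⟨k2, ⟨c2, d2⟩, r2⟩ := rad_formula n b hb a₂ h₂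
  obtain ⟨Y1, y1⟩ := S_cong n b hb a₁ h₁
  obtain ⟨Y2, y2⟩ := S_cong n b hb a₂ h₂
  rw [r1, r2] at h
  generalize (∑ k ∈ Finset.range b, (k : ℤ) * (((k : ℤ) * a₁ + n) % b)) = S1 at *
  generalize (∑ k ∈ Finset.range b, (k : ℤ) * (((k : ℤ) * a₂ + n) % b)) = S2 at *
  have hb' : (b : ℚ) ≠ 0 := by positivity
  have e : (12 * S1 + 6 * b * k1 : ℤ) = 12 * S2 + 6 * b * k2 := by
    have h' : (S1 : ℚ) / b^2 + (k1 : ℚ) / b / 2 = S2 / b^2 + (k2 : ℚ) / b / 2 := by linarith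
    field_simp at h'
    have : (12 * S1 + 6 * b * k1 : ℚ) = 12 * S2 + 6 * b * k2 := by linarith
    exact_mod_cast this
  have hbz : (b : ℤ) ≠ 0 := by omega
  refine ⟨a₁ * Y2 + 6 * a₁ * c2 - a₂ * Y1 - 6 * a₂ * c1, ?_⟩
  apply mul_left_cancel₀ hbz
  linear_combination a₁ * a₂ * e - a₂ * y1 + a₁ * y2 - 6 * b * a₂ * d1 + 6 * b * a₁ * d2
end

section
/- Let b, a₁, a₂ be positive integers with gcd(a₁, b) = 1 and gcd(a₂, b) = 1. If s(a₁, b) = s(a₂, b), then 12·a₁·a₂·b·s(b, a₁) − 12·a₁·a₂·b·s(b, a₂) = a₁²·a₂ + b²·a₂ − b²·a₁ + a₂ − a₂²·a₁ − a₁. -/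
/-- The classical Dedekind sum `s(a,b) = ∑_{k=0}^{b-1} ((k·a/b)) ((k/b))`. -/
def dedekindSum (a : ℤ) (b : ℕ) : ℚ :=
  ∑ k ∈ Finset.range b, sawtooth ((k : ℚ) * a / b) * sawtooth ((k : ℚ) / b)

open Finset in
theorem ded_perm (a b : ℕ) (hb : 0 < b) (h : Nat.gcd a b = 1) (f : ℕ → ℚ) :
    ∑ k ∈ range b, f ((k * a) % b) = ∑ k ∈ range b, f k := by
  have hm : Set.MapsTo (fun k => (k * a) % b) (range b : Set ℕ) (range b : Set ℕ) := by
    intro k _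
    simpa using Nat.mod_lt _ hb
  have hi : Set.InjOn (fun k => (k * a) % b) (range b : Set ℕ) := by
    intro x hx y hy hxy
    simp only [coe_range, Set.mem_Iio] at hx hy
    have h1 : x * a ≡ y * a [MOD b] := hxy
    have h2 : x ≡ y [MOD b] := Nat.ModEq.cancel_right_of_coprime (by rw [Nat.gcd_comm]; exact h) h1
    exact Nat.ModEq.eq_of_lt_of_lt h2 hx hy
  exact sum_nbij (fun k => (k * a) % b) hm hi
    (surjOn_of_injOn_of_card_le _ hm hi le_rfl) (fun _ _ => rfl)

theorem ded_saw (n b : ℕ) (hb : 0 < b) :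
    sawtooth ((n : ℚ) / b) = if n % b = 0 then 0 else ((n % b : ℕ) : ℚ) / b - 1 / 2 := by
  have hb' : (b : ℚ) ≠ 0 := by positivity
  have hf : Int.fract ((n : ℚ) / b) = ((n % b : ℕ) : ℚ) / b := by
    rw [Int.fract_eq_iff]
    refine ⟨by positivity, ?_, ((n / b : ℕ) : ℤ), ?_⟩
    · rw [div_lt_one (by positivity)]
      exact_mod_cast Nat.mod_lt _ hb
    · have := Nat.mod_add_div n b
      have h2 : ((n % b : ℕ) : ℚ) + b * ((n / b : ℕ) : ℚ) = n := by exact_mod_cast this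
      rw [Int.cast_natCast]
      field_simp
      linarith
  unfold sawtooth
  rw [hf]
  by_cases h : n % b = 0
  · simp [h]
  · have : ((n % b : ℕ) : ℚ) / b ≠ 0 := div_ne_zero (by exact_mod_cast h) hb'
    rw [if_neg this, if_neg h]

theorem ded_mod (a b k : ℕ) : (((k * a) % b : ℕ) : ℚ) = k * a - b * ((k * a / b : ℕ) : ℚ) := by
  have := Nat.mod_add_div (k * a) b
  have h2 : (((k * a) % b : ℕ) : ℚ) + b * ((k * a / b : ℕ) : ℚ) = k * a := by exact_mod_cast this
  linarith

open Finset in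
theorem ded_s1 (n : ℕ) : ∑ k ∈ range n, (k : ℚ) = n * (n - 1) / 2 := by
  induction n with
  | zero => simp
  | succ n ih => rw [sum_range_succ, ih]; push_cast; ring

open Finset in
theorem ded_s2 (n : ℕ) : ∑ k ∈ range n, (k : ℚ) ^ 2 = n * (n - 1) * (2 * n - 1) / 6 := by
  induction n with
  | zero => simp
  | succ n ih => rw [sum_range_succ, ih]; push_cast; ring

open Finset in
theorem ded_q (a b : ℕ) (hb : 0 < b) (h : Nat.gcd a b = 1) :
    ∑ k ∈ range b, ((k * a / b : ℕ) : ℚ) = (a - 1) * (b - 1) / 2 := by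
  have h1 := ded_perm a b hb h (fun k => (k : ℚ))
  simp only [ded_mod, sum_sub_distrib, ← mul_sum, ← sum_mul, ded_s1] at h1
  have hb' : (b : ℚ) ≠ 0 := by positivity
  apply mul_left_cancel₀ hb'
  linarith

open Finset in
theorem ded_q2 (a b : ℕ) (hb : 0 < b) (h : Nat.gcd a b = 1) :
    (b : ℚ) ^ 2 * ∑ k ∈ range b, ((k * a / b : ℕ) : ℚ) ^ 2
      = 2 * a * b * ∑ k ∈ range b, (k : ℚ) * ((k * a / b : ℕ) : ℚ)
        + (1 - a ^ 2) * (b * (b - 1) * (2 * b - 1) / 6) := by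
  have h1 := ded_perm a b hb h (fun k => (k : ℚ) ^ 2)
  have h2 : ∀ k : ℕ, (((k * a) % b : ℕ) : ℚ) ^ 2 = (a : ℚ) ^ 2 * (k : ℚ) ^ 2
      - 2 * a * b * ((k : ℚ) * ((k * a / b : ℕ) : ℚ)) + (b : ℚ) ^ 2 * ((k * a / b : ℕ) : ℚ) ^ 2 := by
    intro k; rw [ded_mod]; ring
  simp only [h2, sum_add_distrib, sum_sub_distrib, ← mul_sum, ded_s2] at h1
  linarith

open Finset in
theorem ded_sum (a b : ℕ) (hb : 0 < b) (h : Nat.gcd a b = 1) :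
    (b : ℚ) * dedekindSum a b = a * (b - 1) * (2 * b - 1) / 6
      - ∑ k ∈ range b, (k : ℚ) * ((k * a / b : ℕ) : ℚ) - b * (b - 1) / 4 := by
  have hb' : (b : ℚ) ≠ 0 := by positivity
  have key : ∀ k ∈ range b, sawtooth ((k : ℚ) * (a : ℤ) / b) * sawtooth ((k : ℚ) / b)
      = ((k : ℚ) * a / b - ((k * a / b : ℕ) : ℚ) - 1 / 2) * ((k : ℚ) / b - 1 / 2)
        - if k = 0 then (1 / 4 : ℚ) else 0 := by
    intro k hk
    rw [mem_range] at hk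
    have e1 : (k : ℚ) * (a : ℤ) / b = ((k * a : ℕ) : ℚ) / b := by push_cast; rfl
    rw [e1, ded_saw _ _ hb, ded_saw _ _ hb, Nat.mod_eq_of_lt hk]
    by_cases hk0 : k = 0
    · subst hk0; norm_num
    · have : (k * a) % b ≠ 0 := by
        intro h0
        have h1 : b ∣ k * a := Nat.dvd_of_mod_eq_zero h0
        have h2 : b ∣ k := Nat.Coprime.dvd_of_dvd_mul_right (by rw [Nat.Coprime, Nat.gcd_comm]; exact h) h1
        exact absurd (Nat.le_of_dvd (Nat.pos_of_ne_zero hk0) h2) (by omega)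
      rw [if_neg this, if_neg hk0, if_neg hk0, ded_mod]
      field_simp
      ring
  unfold dedekindSum
  rw [sum_congr rfl key, sum_sub_distrib, sum_ite_eq' , if_pos (mem_range.2 hb)]
  have e2 : ∀ k : ℕ, ((k : ℚ) * a / b - ((k * a / b : ℕ) : ℚ) - 1 / 2) * ((k : ℚ) / b - 1 / 2)
     = (a / b ^ 2 : ℚ) * (k : ℚ) ^ 2 - (1 / b : ℚ) * ((k : ℚ) * ((k * a / b : ℕ) : ℚ))
       - ((1 + a) / (2 * b) : ℚ) * k + (1 / 2 : ℚ) * ((k * a / b : ℕ) : ℚ) + 1 / 4 := by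
    intro k; field_simp; ring
  simp only [e2, sum_add_distrib, sum_sub_distrib, ← mul_sum, ded_s2, ded_s1, ded_q a b hb h,
    sum_const, card_range, nsmul_eq_mul]
  field_simp
  ring

open Finset in
theorem ded_swap (a b : ℕ) (ha : 0 < a) (hb : 0 < b) (h : Nat.gcd a b = 1) :
    2 * ∑ k ∈ range b, (k : ℚ) * ((k * a / b : ℕ) : ℚ) + b * (b - 1)
      = a * (b * (b - 1)) - ∑ j ∈ range a, ((j * b / a : ℕ) : ℚ) ^ 2
        - ∑ j ∈ range a, ((j * b / a : ℕ) : ℚ) := by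
  have L : ∀ k ∈ range b, (k : ℚ) * ((k * a / b : ℕ) : ℚ) + k
      = ∑ j ∈ range a, if j * b / a < k then (k : ℚ) else 0 := by
    intro k hk
    rw [mem_range] at hk
    by_cases hk0 : k = 0
    · subst hk0; simp
    · have hf : (range a).filter (fun j => j * b / a < k) = range (k * a / b + 1) := by
        ext j
        simp only [mem_filter, mem_range, Nat.lt_succ_iff, Nat.div_lt_iff_lt_mul ha,
          Nat.le_div_iff_mul_le hb]
        constructor
        · rintro ⟨_, h2⟩; exact h2.le
        · intro h2
          have hja : j < a := by
            by_contra hc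
            have := Nat.mul_le_mul_right b (not_lt.1 hc)
            nlinarith
          refine ⟨hja, lt_of_le_of_ne h2 fun he => ?_⟩
          have h3 : a ∣ j := Nat.Coprime.dvd_of_dvd_mul_right h (Dvd.intro_left k he.symm)
          have h4 : j = 0 := Nat.eq_zero_of_dvd_of_lt h3 hja
          subst h4
          have : 0 < k * a := Nat.mul_pos (Nat.pos_of_ne_zero hk0) ha
          omega
      rw [← sum_filter, hf, sum_const, card_range, nsmul_eq_mul]
      push_cast; ring
  have R : ∀ j ∈ range a, (∑ k ∈ range b, if j * b / a < k then (k : ℚ) else 0)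
      = b * (b - 1) / 2 - ((j * b / a : ℕ) : ℚ) ^ 2 / 2 - ((j * b / a : ℕ) : ℚ) / 2 := by
    intro j hj
    rw [mem_range] at hj
    have hp : j * b / a < b := by
      rw [Nat.div_lt_iff_lt_mul ha]; nlinarith
    generalize j * b / a = p at hp
    have h1 := sum_filter_add_sum_filter_not (range b) (fun k => p < k) (fun k => (k : ℚ))
    have h2 : (range b).filter (fun k => ¬ p < k) = range (p + 1) := by
      ext k; simp only [mem_filter, mem_range]; omega
    rw [h2, ded_s1, ded_s1] at h1
    rw [← sum_filter]
    push_cast at h1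
    linarith
  have h1 := sum_congr rfl L
  rw [sum_comm, sum_congr rfl R] at h1
  simp only [sum_add_distrib, ded_s1, sum_sub_distrib, ← sum_div, sum_const, card_range,
    nsmul_eq_mul] at h1
  linarith

theorem ded_recip (a b : ℕ) (ha : 0 < a) (hb : 0 < b) (h : Nat.gcd a b = 1) :
    12 * (a : ℚ) * b * (dedekindSum a b + dedekindSum b a) = a ^ 2 + b ^ 2 + 1 - 3 * a * b := by
  have h' : Nat.gcd b a = 1 := by rw [Nat.gcd_comm]; exact h
  have ha' : (a : ℚ) ≠ 0 := by positivity
  have e1 := ded_sum a b hb h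
  have e2 := ded_sum b a ha h'
  have e3 := ded_swap a b ha hb h
  have e4 := ded_q b a ha h'
  have e5 := ded_q2 b a ha h'
  rw [e4] at e3
  apply mul_left_cancel₀ ha'
  linear_combination 12 * (a : ℚ) ^ 2 * e1 + 12 * (a : ℚ) * b * e2 - 6 * (a : ℚ) ^ 2 * e3 + 6 * e5

theorem dedekindSum_eq_imp_identity (b a₁ a₂ : ℕ) (hb : 0 < b)
    (ha₁ : 0 < a₁) (ha₂ : 0 < a₂)
    (h₁ : Nat.gcd a₁ b = 1) (h₂ : Nat.gcd a₂ b = 1)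
    (h : dedekindSum a₁ b = dedekindSum a₂ b) :
    12 * (a₁ : ℚ) * a₂ * b * dedekindSum b a₁
        - 12 * (a₁ : ℚ) * a₂ * b * dedekindSum b a₂ =
      (a₁ : ℚ) ^ 2 * a₂ + (b : ℚ) ^ 2 * a₂ - (b : ℚ) ^ 2 * a₁ + a₂
        - (a₂ : ℚ) ^ 2 * a₁ - a₁ := by
  have r1 := ded_recip a₁ b ha₁ hb h₁
  have r2 := ded_recip a₂ b ha₂ hb h₂
  rw [h] at r1
  linear_combination (a₂ : ℚ) * r1 - (a₁ : ℚ) * r2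
end
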